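/- Let M > M₁(Ω₁) and let u^ε ∈ C⁴(Ω̄^ε) be the strictly k-convex solution of problem (2.1). Then there exists a constant C > 0, depending on n and k but independent of ε, such that sup_{Ω̄^ε} |D²u^ε| ≤ C·(1 + sup_{∂Ω^ε} |D²u^ε|), where |D²u^ε| denotes the operator norm of the Hessian matrix and ∂Ω^ε = ∂Ω₁ ∪ ∂B_ε(0). -/

import Mathlib

/-!
On the Gårding cone `Γ_k` the level sets of `σ_k` bound convex sets: by Marcus and Lopes each
quotient `σ_{j+1} / σ_j` is superadditive there, so `log σ_k` is a sum of concave functions. Schur's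
theorem carries this from spectra to symmetric matrices. Hence if `σ_k(D²u)` is constant and
`L = ∑ σ_{k-1}(λ(x)|l) ∂_l ∂_l` is its linearization at `D²u(x)`, written in an eigenbasis of
`D²u(x)`, then `L u` has a local minimum at `x`, so `L (∂_ξ ∂_ξ u)(x) ≥ 0` for every direction `ξ`.
As `L` is elliptic, `∂_ξ ∂_ξ u + δ|x|²` has no interior maximum, and every pure second derivative is
bounded by its supremum over the boundary. This bounds the eigenvalues of `D²u` from above; they are
bounded from below because their sum is positive.
-/

open Set Metric Filter Topology Bornology
open scoped RealInnerProductSpace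

noncomputable section

/-- Euclidean `n`-space. -/
abbrev Euc (n : ℕ) := EuclideanSpace ℝ (Fin n)

/-- The `k`-th elementary symmetric polynomial of a vector `lam ∈ ℝⁿ`. -/
def esymmVec {n : ℕ} (k : ℕ) (lam : Fin n → ℝ) : ℝ :=
  ∑ S ∈ Finset.powersetCard k (Finset.univ : Finset (Fin n)), ∏ i ∈ S, lam i

/-- `σ_k(A)`: the `k`-th elementary symmetric polynomial of the eigenvalues of a
symmetric matrix `A` (junk value `0` if `A` is not symmetric). -/
noncomputable def sigmaMat {n : ℕ} (k : ℕ) (A : Matrix (Fin n) (Fin n) ℝ) : ℝ := by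
  classical exact if h : A.IsHermitian then esymmVec k h.eigenvalues else 0

/-- The eigenvalues of the symmetric matrix `A` lie in the Gårding cone
`Γ_k = {λ : σ_j(λ) > 0, j = 1, …, k}`. -/
def InGardingCone {n : ℕ} (k : ℕ) (A : Matrix (Fin n) (Fin n) ℝ) : Prop :=
  ∃ h : A.IsHermitian, ∀ j : ℕ, 1 ≤ j → j ≤ k → 0 < esymmVec j h.eigenvalues

/-- The Hessian matrix of `u` at `x`, with derivatives taken within the set `s`. -/
noncomputable def hessianWithin {n : ℕ} (u : Euc n → ℝ) (s : Set (Euc n)) (x : Euc n) :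
    Matrix (Fin n) (Fin n) ℝ :=
  fun i j => iteratedFDerivWithin ℝ 2 u s x
    ![EuclideanSpace.single i (1:ℝ), EuclideanSpace.single j (1:ℝ)]

/-- The Hessian matrix `D²u(x)` of `u` at `x`. -/
noncomputable def hessian {n : ℕ} (u : Euc n → ℝ) (x : Euc n) : Matrix (Fin n) (Fin n) ℝ :=
  fun i j => iteratedFDeriv ℝ 2 u x
    ![EuclideanSpace.single i (1:ℝ), EuclideanSpace.single j (1:ℝ)]

/-- Operator norm of the Hessian matrix of `u` at `x` (derivatives within `s`). -/
noncomputable def hessOpNormWithin {n : ℕ} (u : Euc n → ℝ) (s : Set (Euc n)) (x : Euc n) : ℝ :=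
  ‖Matrix.toEuclideanCLM (𝕜 := ℝ) (hessianWithin u s x)‖

/-- A set has smooth boundary: it is the sublevel set of a smooth defining function
with nonvanishing differential on the boundary. -/
def HasSmoothBoundary {n : ℕ} (Ω : Set (Euc n)) : Prop :=
  ∃ ρ : Euc n → ℝ, ContDiff ℝ (⊤ : ℕ∞) ρ ∧ Ω = {x | ρ x < 0} ∧
    ∀ x ∈ frontier Ω, fderiv ℝ ρ x ≠ 0

/-- `c_{n,k} = (C(n,k))^{1/k}` where `C(n,k)` is the binomial coefficient. -/
noncomputable def cnk (n k : ℕ) : ℝ := (n.choose k : ℝ) ^ ((1:ℝ)/(k:ℝ))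

/-- The radially symmetric subsolution `|x - x₀|²/(2c_{n,k}) − ε²/(2c_{n,k}) − M`. -/
noncomputable def underSol {n : ℕ} (k : ℕ) (x₀ : Euc n) (ε M : ℝ) (x : Euc n) : ℝ :=
  ‖x - x₀‖^2 / (2 * cnk n k) - ε^2 / (2 * cnk n k) - M

/-- The closed ring `Ω̄^ε = closure (Ω₁ \ B̄_ε(x₀))`. -/
def ringSet {n : ℕ} (Ω₁ : Set (Euc n)) (x₀ : Euc n) (ε : ℝ) : Set (Euc n) :=
  closure (Ω₁ \ closedBall x₀ ε)

/-- `u` is a strictly `k`-convex solution of problem (2.1):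
`σ_k(D²u) = 1` in `Ω^ε = Ω₁ \ B̄_ε(x₀)`, `u = 0` on `∂Ω₁`, `u = −M` on `∂B_ε(x₀)`,
with `u ∈ C²(Ω̄^ε)`. -/
def IsSol {n : ℕ} (k : ℕ) (Ω₁ : Set (Euc n)) (x₀ : Euc n) (ε M : ℝ) (u : Euc n → ℝ) : Prop :=
  ContDiffOn ℝ 2 u (ringSet Ω₁ x₀ ε) ∧
  (∀ x ∈ Ω₁ \ closedBall x₀ ε,
      InGardingCone k (hessianWithin u (ringSet Ω₁ x₀ ε) x) ∧
      sigmaMat k (hessianWithin u (ringSet Ω₁ x₀ ε) x) = 1) ∧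
  (∀ x ∈ frontier Ω₁, u x = 0) ∧
  (∀ x ∈ sphere x₀ ε, u x = -M)

/-- `ψ` is a strictly `k`-convex solution of problem (2.2):
`σ_k(D²ψ) = 1` in `Ω₁`, `ψ = 0` on `∂Ω₁`, with `ψ ∈ C^∞(Ω̄₁)`. -/
def IsSol22 {n : ℕ} (k : ℕ) (Ω₁ : Set (Euc n)) (ψ : Euc n → ℝ) : Prop :=
  ContDiffOn ℝ (⊤ : ℕ∞) ψ (closure Ω₁) ∧
  (∀ x ∈ Ω₁, InGardingCone k (hessianWithin ψ (closure Ω₁) x) ∧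
      sigmaMat k (hessianWithin ψ (closure Ω₁) x) = 1) ∧
  (∀ x ∈ frontier Ω₁, ψ x = 0)

/-- `u` is a strictly `k`-convex solution of the Dirichlet problem on the convex ring
`Ω = Ω₁ \ Ω̄₂`: `σ_k(D²u) = 1` in `Ω`, `u = 0` on `∂Ω₁`, `u = −M` on `∂Ω₂`,
with `u ∈ C²(Ω̄)`. -/
def IsSolRing {n : ℕ} (k : ℕ) (Ω₁ Ω₂ : Set (Euc n)) (M : ℝ) (u : Euc n → ℝ) : Prop :=
  ContDiffOn ℝ 2 u (closure (Ω₁ \ closure Ω₂)) ∧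
  (∀ x ∈ Ω₁ \ closure Ω₂,
      InGardingCone k (hessianWithin u (closure (Ω₁ \ closure Ω₂)) x) ∧
      sigmaMat k (hessianWithin u (closure (Ω₁ \ closure Ω₂)) x) = 1) ∧
  (∀ x ∈ frontier Ω₁, u x = 0) ∧
  (∀ x ∈ frontier Ω₂, u x = -M)

/-- The extension `ũ` of `u`, equal to `−M` on the closed ball `B̄_ε(x₀)`. -/
noncomputable def extendBy {n : ℕ} (u : Euc n → ℝ) (x₀ : Euc n) (ε M : ℝ) (x : Euc n) : ℝ := by
  classical exact if x ∈ closedBall x₀ ε then -M else u x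

/-- The extension `ũ` of `u`, equal to `−M` on the set `Ω₂`. -/
noncomputable def extendOn {n : ℕ} (u : Euc n → ℝ) (Ω₂ : Set (Euc n)) (M : ℝ) (x : Euc n) : ℝ := by
  classical exact if x ∈ Ω₂ then -M else u x

/-- The quadratic polynomial with Hessian `A`, linear part `b` and constant term `c`. -/
noncomputable def quadPoly {n : ℕ} (A : Matrix (Fin n) (Fin n) ℝ) (b : Euc n) (c : ℝ)
    (x : Euc n) : ℝ :=
  (∑ i, ∑ j, A i j * x i * x j) / 2 + ⟪b, x⟫ + c

/-- The `k`-th elementary symmetric polynomial of the entries of `x` indexed by `s`. Varying `s`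
gives the paper's `σ_k(λ|i)` as `esymmOn (s.erase i) k λ`. -/
def esymmOn {ι : Type*} (s : Finset ι) (k : ℕ) (x : ι → ℝ) : ℝ :=
  ∑ S ∈ s.powersetCard k, ∏ i ∈ S, x i

/-- The Gårding cone `Γ_k` in the variables indexed by `s`. The condition at `j = 0` is automatic,
as `σ_0 = 1`. -/
def gardingCone {ι : Type*} (s : Finset ι) (k : ℕ) : Set (ι → ℝ) :=
  {x | ∀ j ≤ k, 0 < esymmOn s j x}

/-- The quotient `q_k = σ_{k+1} / σ_k` of Marcus and Lopes. -/
def esymmQuotient {ι : Type*} (s : Finset ι) (k : ℕ) (x : ι → ℝ) : ℝ :=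
  esymmOn s (k + 1) x / esymmOn s k x

section ElementarySymmetric

variable {ι : Type*} {s : Finset ι} {k : ℕ} {x y : ι → ℝ}

lemma esymmOn_zero (s : Finset ι) (x : ι → ℝ) : esymmOn s 0 x = 1 := by
  simp [esymmOn]

lemma esymmOn_one (s : Finset ι) (x : ι → ℝ) : esymmOn s 1 x = ∑ i ∈ s, x i := by
  simp [esymmOn, Finset.powersetCard_one]

lemma esymmOn_empty_succ (k : ℕ) (x : ι → ℝ) : esymmOn ∅ (k + 1) x = 0 := by
  rw [esymmOn, Finset.powersetCard_eq_empty.2 (by simp), Finset.sum_empty]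

lemma esymmOn_smul (s : Finset ι) (k : ℕ) (c : ℝ) (x : ι → ℝ) :
    esymmOn s k (c • x) = c ^ k * esymmOn s k x := by
  rw [esymmOn, esymmOn, Finset.mul_sum]
  refine Finset.sum_congr rfl fun S hS => ?_
  simp [Finset.prod_mul_distrib, (Finset.mem_powersetCard.1 hS).2]

lemma esymmOn_univ_comp_perm [Fintype ι] (k : ℕ) (x : ι → ℝ) (σ : Equiv.Perm ι) :
    esymmOn Finset.univ k (x ∘ σ) = esymmOn Finset.univ k x := by
  have hmap := Finset.powersetCard_map σ.toEmbedding k Finset.univ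
  rw [Finset.map_univ_equiv] at hmap
  rw [esymmOn, esymmOn]
  conv_rhs => rw [hmap, Finset.sum_map]
  simp [Finset.mapEmbedding_apply]

variable [DecidableEq ι] {i : ι}

lemma esymmOn_insert (hi : i ∉ s) (k : ℕ) (x : ι → ℝ) :
    esymmOn (insert i s) (k + 1) x = esymmOn s (k + 1) x + x i * esymmOn s k x := by
  have hnotMem {m : ℕ} {S : Finset ι} (hS : S ∈ s.powersetCard m) : i ∉ S :=
    fun h => hi ((Finset.mem_powersetCard.1 hS).1 h)
  simp only [esymmOn]
  rw [Finset.powersetCard_succ_insert hi, Finset.sum_union, Finset.sum_image, Finset.mul_sum]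
  · exact congrArg _ (Finset.sum_congr rfl fun S hS => Finset.prod_insert (hnotMem hS))
  · intro S hS T hT hST
    rw [← Finset.erase_insert (hnotMem hS), ← Finset.erase_insert (hnotMem hT)]
    exact congrArg (Finset.erase · i) hST
  · rw [Finset.disjoint_left]
    rintro S hS hS'
    obtain ⟨T, -, rfl⟩ := Finset.mem_image.1 hS'
    exact hnotMem hS (Finset.mem_insert_self i T)

lemma esymmOn_succ_eq_erase (hi : i ∈ s) (k : ℕ) (x : ι → ℝ) :
    esymmOn s (k + 1) x = esymmOn (s.erase i) (k + 1) x + x i * esymmOn (s.erase i) k x := by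
  rw [← esymmOn_insert (Finset.notMem_erase i s), Finset.insert_erase hi]

lemma hasLineDerivAt_esymmOn_succ (s : Finset ι) (k : ℕ) (x v : ι → ℝ) :
    HasLineDerivAt ℝ (esymmOn s (k + 1)) (∑ i ∈ s, v i * esymmOn (s.erase i) k x) x v := by
  unfold HasLineDerivAt
  induction s using Finset.induction_on generalizing k with
  | empty => simpa [esymmOn_empty_succ] using hasDerivAt_const (0 : ℝ) (0 : ℝ)
  | insert a s ha ih =>
    have hcoord : HasDerivAt (fun t : ℝ => (x + t • v) a) (v a) 0 := by
      simpa using ((hasDerivAt_id (0 : ℝ)).mul_const (v a)).const_add (x a)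
    have herase : ∀ i ∈ s, (insert a s).erase i = insert a (s.erase i) := fun i hi =>
      Finset.erase_insert_of_ne (ne_of_mem_of_not_mem hi ha).symm
    simp only [esymmOn_insert ha, Finset.sum_insert ha, Finset.erase_insert ha]
    rw [Finset.sum_congr rfl fun i hi => by rw [herase i hi]]
    cases k with
    | zero =>
      simp only [esymmOn_zero, mul_one] at ih ⊢
      simpa [esymmOn_zero, add_comm] using (ih 0).fun_add hcoord
    | succ k =>
      refine ((ih (k + 1)).fun_add (hcoord.fun_mul (ih k))).congr_deriv ?_
      have hsum : ∑ i ∈ s, v i * esymmOn (insert a (s.erase i)) (k + 1) x =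
          ∑ i ∈ s, v i * esymmOn (s.erase i) (k + 1) x +
            x a * ∑ i ∈ s, v i * esymmOn (s.erase i) k x := by
        rw [Finset.mul_sum, ← Finset.sum_add_distrib]
        refine Finset.sum_congr rfl fun i _ => ?_
        rw [esymmOn_insert (fun h => ha (Finset.mem_of_mem_erase h))]
        ring
      rw [hsum]
      simp only [zero_smul, add_zero]
      ring

/- Euler's identity for the homogeneous function `σ_{k+1}`: both sides are its derivative at `x` in
direction `x`. -/
lemma sum_mul_esymmOn_erase (s : Finset ι) (k : ℕ) (x : ι → ℝ) :
    ∑ i ∈ s, x i * esymmOn (s.erase i) k x = (k + 1) * esymmOn s (k + 1) x := by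
  refine (hasLineDerivAt_esymmOn_succ s k x x).unique ?_
  have hline : (fun t : ℝ => esymmOn s (k + 1) (x + t • x)) =
      fun t => (1 + t) ^ (k + 1) * esymmOn s (k + 1) x := by
    ext t
    rw [← esymmOn_smul, add_smul, one_smul]
  rw [HasLineDerivAt, hline]
  simpa using (((hasDerivAt_id (0 : ℝ)).const_add 1).pow (k + 1)).mul_const (esymmOn s (k + 1) x)

end ElementarySymmetric

section Newton

open Polynomial

lemma splits_derivative {p : ℝ[X]} (hp : p.Splits) : (derivative p).Splits := by
  rw [splits_iff_card_roots] at *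
  have hrolle := card_roots_le_derivative p
  have hdegree := natDegree_derivative_le p
  exact le_antisymm (card_roots' _) (by omega)

lemma splits_iterate_derivative {p : ℝ[X]} (hp : p.Splits) (m : ℕ) : (derivative^[m] p).Splits := by
  induction m with
  | zero => exact hp
  | succ m ih =>
    rw [Function.iterate_succ_apply']
    exact splits_derivative ih

lemma eval_mul_eval_derivative_derivative_le_sq {p : ℝ[X]} (hp : p.Splits) (t : ℝ) :
    p.eval t * (derivative (derivative p)).eval t ≤ ((derivative p).eval t) ^ 2 := by
  have hmonic (m : Multiset ℝ) : let q := (m.map (X - C ·)).prod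
      q.eval t * (derivative (derivative q)).eval t ≤ ((derivative q).eval t) ^ 2 := by
    induction m using Multiset.induction_on with
    | empty => simp
    | cons a m ih =>
      simp only [Multiset.map_cons, Multiset.prod_cons, derivative_mul, derivative_add, eval_add,
        eval_mul, derivative_sub, derivative_X, derivative_C, eval_sub, eval_X, eval_C, sub_zero,
        one_mul]
      nlinarith [mul_le_mul_of_nonneg_left ih (sq_nonneg (t - a)),
        sq_nonneg (((m.map (X - C ·)).prod).eval t)]
  rw [hp.eq_prod_roots]
  simp only [derivative_mul, derivative_C, zero_mul, zero_add, eval_mul, eval_C]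
  nlinarith [mul_le_mul_of_nonneg_left (hmonic p.roots) (sq_nonneg p.leadingCoeff)]

variable {ι : Type*}

lemma coeff_prod_C_mul_X_add_one (s : Finset ι) (x : ι → ℝ) (k : ℕ) :
    (∏ i ∈ s, (C (x i) * X + 1)).coeff k = esymmOn s k x := by
  classical
  induction s using Finset.induction_on generalizing k with
  | empty => cases k <;> simp [esymmOn_zero, esymmOn_empty_succ, coeff_one]
  | insert a s ha ih =>
    rw [Finset.prod_insert ha, add_mul, one_mul, mul_assoc, coeff_add, coeff_C_mul]
    cases k with
    | zero => simp [ih, esymmOn_zero]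
    | succ k => rw [coeff_X_mul, ih, ih, esymmOn_insert ha, add_comm]

lemma eval_zero_iterate_derivative (p : ℝ[X]) (k : ℕ) :
    (derivative^[k] p).eval 0 = k.factorial * p.coeff k := by
  rw [← coeff_zero_eq_eval_zero, coeff_iterate_derivative, zero_add, Nat.descFactorial_self,
    nsmul_eq_mul]

lemma newton_inequality (s : Finset ι) (k : ℕ) (x : ι → ℝ) :
    (k + 2) * (esymmOn s k x * esymmOn s (k + 2) x) ≤ (k + 1) * esymmOn s (k + 1) x ^ 2 := by
  have hsplits : (∏ i ∈ s, (C (x i) * X + 1)).Splits :=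
    Splits.prod fun i _ => Splits.of_natDegree_le_one (by compute_degree)
  have hlaguerre :=
    eval_mul_eval_derivative_derivative_le_sq (splits_iterate_derivative hsplits k) 0
  simp only [← Function.iterate_succ_apply' derivative, eval_zero_iterate_derivative,
    coeff_prod_C_mul_X_add_one, Nat.succ_eq_add_one, Nat.factorial_succ] at hlaguerre
  push_cast at hlaguerre
  have hfactor : (0 : ℝ) < (k.factorial : ℝ) ^ 2 * (k + 1) := by positivity
  refine le_of_mul_le_mul_left ?_ hfactor
  linarith

end Newton

section GardingCone

variable {ι : Type*} {s : Finset ι} {k : ℕ} {x y : ι → ℝ}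

lemma mem_gardingCone_succ :
    x ∈ gardingCone s (k + 1) ↔ x ∈ gardingCone s k ∧ 0 < esymmOn s (k + 1) x := by
  refine ⟨fun h => ⟨fun j hj => h j (by omega), h _ le_rfl⟩, fun h j hj => ?_⟩
  obtain hj | rfl := Nat.le_succ_iff.1 hj
  exacts [h.1 j hj, h.2]

lemma smul_mem_gardingCone {c : ℝ} (hc : 0 < c) (hx : x ∈ gardingCone s k) :
    c • x ∈ gardingCone s k := fun j hj => by
  rw [esymmOn_smul]
  exact mul_pos (pow_pos hc j) (hx j hj)

lemma esymmQuotient_smul (s : Finset ι) (k : ℕ) {c : ℝ} (hc : c ≠ 0) (x : ι → ℝ) :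
    esymmQuotient s k (c • x) = c * esymmQuotient s k x := by
  rw [esymmQuotient, esymmQuotient, esymmOn_smul, esymmOn_smul, pow_succ, mul_assoc,
    mul_div_mul_left _ _ (pow_ne_zero k hc), mul_div_assoc]

lemma esymmQuotient_pos (hx : x ∈ gardingCone s (k + 1)) : 0 < esymmQuotient s k x :=
  div_pos (hx _ le_rfl) (hx k k.le_succ)

lemma parallel_sum_add_le {x y p q r : ℝ} (hx : 0 < x + p) (hy : 0 < y + q) (hr : p + q ≤ r) :
    x * p / (x + p) + y * q / (y + q) ≤ (x + y) * r / (x + y + r) := by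
  have hparallel {a b : ℝ} (h : 0 < a + b) : a * b / (a + b) = a - a ^ 2 / (a + b) := by
    field_simp
    ring
  rw [hparallel hx, hparallel hy, hparallel (by linarith)]
  have hsum : (x + y) ^ 2 / (x + y + r) ≤ (x + y) ^ 2 / (x + p + (y + q)) :=
    div_le_div_of_nonneg_left (sq_nonneg _) (by linarith) (by linarith)
  have hsedrakyan : (x + y) ^ 2 / (x + p + (y + q)) ≤ x ^ 2 / (x + p) + y ^ 2 / (y + q) := by
    simpa using Finset.sq_sum_div_le_sum_sq_div Finset.univ ![x, y] (g := ![x + p, y + q])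
      (by simp [Fin.forall_fin_two, hx, hy])
  linarith

section Erase

variable [DecidableEq ι] {i : ι}

lemma erase_mem_gardingCone (hx : x ∈ gardingCone s (k + 1)) (hi : i ∈ s) :
    x ∈ gardingCone (s.erase i) k := by
  intro j
  induction j with
  | zero => simp [esymmOn_zero]
  | succ j ih =>
    intro hj
    have hσ := ih (by omega)
    have hsplit₁ := hx (j + 1) (by omega)
    have hsplit₂ := hx (j + 2) (by omega)
    rw [esymmOn_succ_eq_erase hi] at hsplit₁ hsplit₂
    by_contra! hneg
    have hxi : 0 < x i := by
      by_contra! hxi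
      nlinarith
    have hnext : 0 < esymmOn (s.erase i) (j + 2) x := by
      linarith [mul_nonpos_of_nonneg_of_nonpos hxi.le hneg]
    have hsq : esymmOn (s.erase i) (j + 1) x ^ 2 ≤
        esymmOn (s.erase i) j x * esymmOn (s.erase i) (j + 2) x := by
      nlinarith [mul_nonneg (neg_nonneg.2 hneg) hsplit₁.le, mul_pos hσ hsplit₂]
    nlinarith [newton_inequality (s.erase i) j x, mul_pos hσ hnext]

lemma add_esymmQuotient_erase (hx : x ∈ gardingCone s (k + 1)) (hi : i ∈ s) :
    x i + esymmQuotient (s.erase i) k x = esymmOn s (k + 1) x / esymmOn (s.erase i) k x := by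
  have hσ := erase_mem_gardingCone hx hi k le_rfl
  rw [esymmQuotient, esymmOn_succ_eq_erase hi]
  field_simp
  ring

lemma add_esymmQuotient_erase_pos (hx : x ∈ gardingCone s (k + 1)) (hi : i ∈ s) :
    0 < x i + esymmQuotient (s.erase i) k x := by
  rw [add_esymmQuotient_erase hx hi]
  exact div_pos (hx _ le_rfl) (erase_mem_gardingCone hx hi k le_rfl)

lemma esymmQuotient_succ_eq_sum (hx : x ∈ gardingCone s (k + 1)) :
    (k + 2) * esymmQuotient s (k + 1) x =
      ∑ i ∈ s, x i * esymmQuotient (s.erase i) k x / (x i + esymmQuotient (s.erase i) k x) := by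
  have heuler := sum_mul_esymmOn_erase s (k + 1) x
  push_cast at heuler
  rw [esymmQuotient, ← mul_div_assoc, show (k : ℝ) + 2 = k + 1 + 1 by ring, ← heuler,
    Finset.sum_div]
  refine Finset.sum_congr rfl fun i hi => ?_
  have hσ := erase_mem_gardingCone hx hi k le_rfl
  have hσ' := hx (k + 1) le_rfl
  rw [add_esymmQuotient_erase hx hi, esymmQuotient]
  field_simp

end Erase

theorem esymmQuotient_superadditive (k : ℕ) (s : Finset ι) (x y : ι → ℝ)
    (hx : x ∈ gardingCone s k) (hy : y ∈ gardingCone s k) :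
    x + y ∈ gardingCone s k ∧
      esymmQuotient s k x + esymmQuotient s k y ≤ esymmQuotient s k (x + y) := by
  classical
  induction k generalizing s with
  | zero =>
    refine ⟨fun j hj => ?_, ?_⟩
    · simp [Nat.le_zero.1 hj, esymmOn_zero]
    · simp [esymmQuotient, esymmOn_zero, esymmOn_one, Finset.sum_add_distrib]
  | succ k ih =>
    obtain ⟨hmem, hle⟩ := ih s (mem_gardingCone_succ.1 hx).1 (mem_gardingCone_succ.1 hy).1
    have hpos : 0 < esymmQuotient s k (x + y) :=
      (add_pos (esymmQuotient_pos hx) (esymmQuotient_pos hy)).trans_le hle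
    have hxy : x + y ∈ gardingCone s (k + 1) :=
      mem_gardingCone_succ.2 ⟨hmem, (div_pos_iff_of_pos_right (hmem k le_rfl)).1 hpos⟩
    refine ⟨hxy, le_of_mul_le_mul_left ?_ (by positivity : (0 : ℝ) < k + 2)⟩
    rw [mul_add, esymmQuotient_succ_eq_sum hx, esymmQuotient_succ_eq_sum hy,
      esymmQuotient_succ_eq_sum hxy, ← Finset.sum_add_distrib]
    exact Finset.sum_le_sum fun i hi => parallel_sum_add_le (add_esymmQuotient_erase_pos hx hi)
      (add_esymmQuotient_erase_pos hy hi)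
      (ih (s.erase i) (erase_mem_gardingCone hx hi) (erase_mem_gardingCone hy hi)).2

theorem convex_gardingCone (s : Finset ι) (k : ℕ) : Convex ℝ (gardingCone s k) :=
  convex_iff_forall_pos.2 fun _ hx _ hy _ _ ha hb _ =>
    (esymmQuotient_superadditive k s _ _ (smul_mem_gardingCone ha hx)
      (smul_mem_gardingCone hb hy)).1

theorem concaveOn_esymmQuotient (s : Finset ι) (k : ℕ) :
    ConcaveOn ℝ (gardingCone s k) (esymmQuotient s k) := by
  refine concaveOn_iff_forall_pos.2 ⟨convex_gardingCone s k, fun x hx y hy a b ha hb _ => ?_⟩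
  simpa only [esymmQuotient_smul s k ha.ne', esymmQuotient_smul s k hb.ne', smul_eq_mul] using
    (esymmQuotient_superadditive k s _ _ (smul_mem_gardingCone ha hx)
      (smul_mem_gardingCone hb hy)).2

lemma concaveOn_log {E : Type*} [AddCommGroup E] [Module ℝ E] {S : Set E} {f : E → ℝ}
    (hf : ConcaveOn ℝ S f) (hpos : ∀ x ∈ S, 0 < f x) :
    ConcaveOn ℝ S (fun x => Real.log (f x)) := by
  refine ⟨hf.1, fun x hx y hy a b ha hb hab => ?_⟩
  have hlog := strictConcaveOn_log_Ioi.concaveOn.2 (hpos x hx) (hpos y hy) ha hb hab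
  have hcomb : 0 < a • f x + b • f y :=
    convex_Ioi (0 : ℝ) (hpos x hx) (hpos y hy) ha hb hab
  exact hlog.trans (Real.log_le_log hcomb (hf.2 hx hy ha hb hab))

theorem concaveOn_log_esymmOn (s : Finset ι) (k : ℕ) :
    ConcaveOn ℝ (gardingCone s k) (fun x => Real.log (esymmOn s k x)) := by
  induction k with
  | zero => simpa only [esymmOn_zero, Real.log_one] using
      concaveOn_const (0 : ℝ) (convex_gardingCone s 0)
  | succ k ih =>
    have hsub : gardingCone s (k + 1) ⊆ gardingCone s k := fun _ hx =>
      (mem_gardingCone_succ.1 hx).1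
    have hconvex := convex_gardingCone s (k + 1)
    refine ((ih.subset hsub hconvex).add (concaveOn_log
      ((concaveOn_esymmQuotient s k).subset hsub hconvex) fun _ => esymmQuotient_pos)).congr ?_
    intro x hx
    have hσ := hx k k.le_succ
    simp only [Pi.add_apply, esymmQuotient]
    rw [← Real.log_mul hσ.ne' (div_pos (hx _ le_rfl) hσ).ne', mul_div_cancel₀ _ hσ.ne']

theorem quasiconcaveOn_esymmOn (s : Finset ι) (k : ℕ) :
    QuasiconcaveOn ℝ (gardingCone s k) (esymmOn s k) := by
  intro r
  have hexp := (concaveOn_log_esymmOn s k).quasiconcaveOn.monotone_comp Real.exp_monotone r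
  refine Set.ext (fun x => and_congr_right fun hx => ?_) ▸ hexp
  rw [Function.comp_apply, Real.exp_log (hx k le_rfl)]

/- The segment from `x` to `y` stays in the superlevel set of `σ_{k+1}` through `x`, so the
derivative of `σ_{k+1}` along it is nonnegative. -/
theorem sum_mul_esymmOn_erase_le [DecidableEq ι] (hx : x ∈ gardingCone s (k + 1))
    (hy : y ∈ gardingCone s (k + 1)) (hxy : esymmOn s (k + 1) x ≤ esymmOn s (k + 1) y) :
    ∑ i ∈ s, x i * esymmOn (s.erase i) k x ≤ ∑ i ∈ s, y i * esymmOn (s.erase i) k x := by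
  suffices 0 ≤ ∑ i ∈ s, (y - x) i * esymmOn (s.erase i) k x by
    simpa [sub_mul] using this
  refine ge_of_tendsto (hasLineDerivAt_esymmOn_succ s k x (y - x)).tendsto_slope_zero_right ?_
  filter_upwards [Ioo_mem_nhdsGT one_pos] with t ht
  have hsegment := ((quasiconcaveOn_esymmOn s (k + 1)) (esymmOn s (k + 1) x)).add_smul_sub_mem
    ⟨hx, le_rfl⟩ ⟨hy, hxy⟩ ⟨ht.1.le, ht.2.le⟩
  simpa using mul_nonneg (inv_nonneg.2 ht.1.le) (sub_nonneg.2 hsegment.2)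

end GardingCone

section Matrix

variable {ι : Type*} [Fintype ι]

lemma abs_le_card_mul_of_sum_nonneg {x : ι → ℝ} {K : ℝ} (hx : 0 ≤ ∑ i, x i)
    (hK : ∀ i, x i ≤ K) (i : ι) : |x i| ≤ Fintype.card ι * K := by
  have hgap : K - x i ≤ Fintype.card ι * K - ∑ j, x j := by
    simpa using Finset.single_le_sum (f := fun j => K - x j)
      (fun j _ => sub_nonneg.2 (hK j)) (Finset.mem_univ i)
  have hcard : (1 : ℝ) ≤ Fintype.card ι := by
    exact_mod_cast Fintype.card_pos_iff.2 ⟨i⟩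
  have hK_nonneg : 0 ≤ K := by
    by_contra! hneg
    nlinarith [hK i]
  rw [abs_le]
  constructor <;> nlinarith [hK i]

variable [DecidableEq ι]

lemma mulVec_mem_of_mem_doublyStochastic {S : Set (ι → ℝ)} (hS : Convex ℝ S)
    (hperm : ∀ σ : Equiv.Perm ι, ∀ x ∈ S, x ∘ σ ∈ S) {D : Matrix ι ι ℝ}
    (hD : D ∈ doublyStochastic ℝ ι) {x : ι → ℝ} (hx : x ∈ S) : D.mulVec x ∈ S := by
  have hpreimage : Convex ℝ {D : Matrix ι ι ℝ | D.mulVec x ∈ S} := by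
    intro D₁ h₁ D₂ h₂ a b ha hb hab
    simpa only [mem_ofPred_eq, Matrix.add_mulVec, Matrix.smul_mulVec] using hS h₁ h₂ ha hb hab
  rw [← SetLike.mem_coe, doublyStochastic_eq_convexHull_permMatrix] at hD
  refine convexHull_min ?_ hpreimage hD
  rintro _ ⟨σ, rfl⟩
  rw [mem_ofPred_eq, Matrix.permMatrix_mulVec]
  exact hperm σ x hx

lemma sq_inner_mem_doublyStochastic {E : Type*} [NormedAddCommGroup E] [InnerProductSpace ℝ E]
    (b v : OrthonormalBasis ι ℝ E) :
    Matrix.of (fun l m => ⟪b m, v l⟫ ^ 2) ∈ doublyStochastic ℝ ι := by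
  refine mem_doublyStochastic_iff_sum.2 ⟨fun l m => sq_nonneg _, fun l => ?_, fun m => ?_⟩
  · simpa using b.sum_sq_norm_inner_right (v l)
  · simpa using v.sum_sq_norm_inner_left (b m)

variable {A B : Matrix ι ι ℝ}

lemma toEuclideanCLM_eigenvectorBasis (hA : A.IsHermitian) (i : ι) :
    Matrix.toEuclideanCLM (𝕜 := ℝ) A (hA.eigenvectorBasis i) =
      hA.eigenvalues i • hA.eigenvectorBasis i :=
  WithLp.ofLp_injective 2 <| by
    rw [Matrix.ofLp_toEuclideanCLM, hA.mulVec_eigenvectorBasis, WithLp.ofLp_smul]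

lemma inner_eigenvectorBasis_toEuclideanCLM (hA : A.IsHermitian) (i : ι)
    (v : EuclideanSpace ℝ ι) :
    ⟪hA.eigenvectorBasis i, Matrix.toEuclideanCLM (𝕜 := ℝ) A v⟫ =
      hA.eigenvalues i * ⟪hA.eigenvectorBasis i, v⟫ := by
  have hsymm := (hA.isSelfAdjoint.map (Matrix.toEuclideanCLM (𝕜 := ℝ))).isSymmetric
  have hswap := hsymm (hA.eigenvectorBasis i) v
  simp only [ContinuousLinearMap.coe_coe, toEuclideanCLM_eigenvectorBasis,
    real_inner_smul_left] at hswap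
  exact hswap.symm

lemma inner_toEuclideanCLM_self (hA : A.IsHermitian) (v : EuclideanSpace ℝ ι) :
    ⟪v, Matrix.toEuclideanCLM (𝕜 := ℝ) A v⟫ =
      ∑ m, ⟪hA.eigenvectorBasis m, v⟫ ^ 2 * hA.eigenvalues m := by
  rw [← hA.eigenvectorBasis.sum_inner_mul_inner]
  refine Finset.sum_congr rfl fun m _ => ?_
  rw [inner_eigenvectorBasis_toEuclideanCLM, real_inner_comm]
  ring

/- Schur's half of the Schur–Horn theorem: the diagonal is a doubly stochastic image of the
spectrum. -/
theorem diagonal_mem_of_eigenvalues_mem {S : Set (ι → ℝ)} (hS : Convex ℝ S)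
    (hperm : ∀ σ : Equiv.Perm ι, ∀ x ∈ S, x ∘ σ ∈ S) (hA : A.IsHermitian)
    (hmem : hA.eigenvalues ∈ S) (v : OrthonormalBasis ι ℝ (EuclideanSpace ℝ ι)) :
    (fun l => ⟪v l, Matrix.toEuclideanCLM (𝕜 := ℝ) A (v l)⟫) ∈ S := by
  simp only [inner_toEuclideanCLM_self hA]
  exact mulVec_mem_of_mem_doublyStochastic hS hperm
    (sq_inner_mem_doublyStochastic hA.eigenvectorBasis v) hmem

/- The derivative of `σ_{k+1}` at `A` is `diag (σ_k(λ|l))` in an eigenbasis of `A`, so this is the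
supporting hyperplane inequality at `A` for the superlevel set of `σ_{k+1}`. -/
theorem sum_esymmOn_erase_mul_eigenvalues_le {k : ℕ} (hA : A.IsHermitian) (hB : B.IsHermitian)
    (hAΓ : hA.eigenvalues ∈ gardingCone Finset.univ (k + 1))
    (hBΓ : hB.eigenvalues ∈ gardingCone Finset.univ (k + 1))
    (hAB : esymmOn Finset.univ (k + 1) hA.eigenvalues ≤
      esymmOn Finset.univ (k + 1) hB.eigenvalues) :
    ∑ l, hA.eigenvalues l * esymmOn (Finset.univ.erase l) k hA.eigenvalues ≤
      ∑ l, ⟪hA.eigenvectorBasis l, Matrix.toEuclideanCLM (𝕜 := ℝ) B (hA.eigenvectorBasis l)⟫ *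
        esymmOn (Finset.univ.erase l) k hA.eigenvalues := by
  have hdiag := diagonal_mem_of_eigenvalues_mem
    (quasiconcaveOn_esymmOn Finset.univ (k + 1) (esymmOn Finset.univ (k + 1) hA.eigenvalues))
    (fun σ x hx => ⟨fun j hj => by simpa only [esymmOn_univ_comp_perm] using hx.1 j hj,
      by simpa only [esymmOn_univ_comp_perm] using hx.2⟩) hB ⟨hBΓ, hAB⟩ hA.eigenvectorBasis
  exact sum_mul_esymmOn_erase_le hAΓ hdiag.1 hdiag.2

lemma norm_toEuclideanCLM_le_of_abs_eigenvalues_le (hA : A.IsHermitian) {c : ℝ} (hc : 0 ≤ c)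
    (hle : ∀ i, |hA.eigenvalues i| ≤ c) : ‖Matrix.toEuclideanCLM (𝕜 := ℝ) A‖ ≤ c := by
  refine ContinuousLinearMap.opNorm_le_bound _ hc fun v => le_of_sq_le_sq ?_ (by positivity)
  rw [mul_pow, ← hA.eigenvectorBasis.sum_sq_norm_inner_right,
    ← hA.eigenvectorBasis.sum_sq_norm_inner_right, Finset.mul_sum]
  refine Finset.sum_le_sum fun i _ => ?_
  rw [inner_eigenvectorBasis_toEuclideanCLM, norm_mul, mul_pow]
  gcongr
  exact hle i

/- A nonnegative trace turns the upper bound on the eigenvalues into a lower one. -/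
theorem norm_toEuclideanCLM_le_card_mul (hA : A.IsHermitian) (htrace : 0 ≤ ∑ i, hA.eigenvalues i)
    {K : ℝ} (hK : ∀ v : EuclideanSpace ℝ ι, ‖v‖ = 1 →
      ⟪v, Matrix.toEuclideanCLM (𝕜 := ℝ) A v⟫ ≤ K) :
    ‖Matrix.toEuclideanCLM (𝕜 := ℝ) A‖ ≤ Fintype.card ι * K := by
  have hle (i : ι) : hA.eigenvalues i ≤ K := by
    simpa [inner_eigenvectorBasis_toEuclideanCLM] using
      hK (hA.eigenvectorBasis i) (hA.eigenvectorBasis.norm_eq_one i)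
  have hsum : ∑ i, hA.eigenvalues i ≤ Fintype.card ι * K := by
    simpa using Finset.sum_le_card_nsmul Finset.univ _ _ fun i _ => hle i
  exact norm_toEuclideanCLM_le_of_abs_eigenvalues_le hA (htrace.trans hsum)
    (abs_le_card_mul_of_sum_nonneg htrace hle)

variable {n k : ℕ}

lemma InGardingCone.exists_eigenvalues_mem {A : Matrix (Fin n) (Fin n) ℝ} (hA : InGardingCone k A) :
    ∃ h : A.IsHermitian, h.eigenvalues ∈ gardingCone Finset.univ k := by
  obtain ⟨h, hpos⟩ := hA
  refine ⟨h, fun j hj => ?_⟩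
  obtain rfl | hj₀ := j.eq_zero_or_pos
  exacts [by simp [esymmOn_zero], hpos j hj₀ hj]

lemma sigmaMat_eq {A : Matrix (Fin n) (Fin n) ℝ} (hA : A.IsHermitian) (k : ℕ) :
    sigmaMat k A = esymmOn Finset.univ k hA.eigenvalues :=
  dif_pos hA

lemma inner_toEuclideanCLM_hessianWithin (u : Euc n → ℝ) (s : Set (Euc n)) (x a b : Euc n) :
    ⟪a, Matrix.toEuclideanCLM (𝕜 := ℝ) (hessianWithin u s x) b⟫ =
      iteratedFDerivWithin ℝ 2 u s x ![a, b] := by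
  have hrepr (v : Euc n) : v = ∑ i, v i • EuclideanSpace.single i (1 : ℝ) := by
    simpa using ((EuclideanSpace.basisFun (Fin n) ℝ).sum_repr v).symm
  have hexpand : ![a, b] = fun r => ∑ i, ![a, b] r i • EuclideanSpace.single i (1 : ℝ) :=
    funext fun r => hrepr _
  conv_rhs => rw [hexpand, ContinuousMultilinearMap.map_sum]
  rw [Matrix.inner_toEuclideanCLM, ← (finTwoArrowEquiv _).symm.sum_comp, Fintype.sum_prod_type]
  simp only [dotProduct, Matrix.mulVec, Finset.mul_sum]
  refine Finset.sum_congr rfl fun i _ => Finset.sum_congr rfl fun j _ => ?_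
  have hbasis :
      (fun r => EuclideanSpace.single ((finTwoArrowEquiv (Fin n)).symm (i, j) r) (1 : ℝ)) =
        ![EuclideanSpace.single i 1, EuclideanSpace.single j 1] := by
    ext r : 1
    fin_cases r <;> rfl
  rw [ContinuousMultilinearMap.map_smul_univ, hbasis, Fin.prod_univ_two, hessianWithin]
  simp only [finTwoArrowEquiv_symm_apply, Matrix.cons_val_zero, Matrix.cons_val_one, smul_eq_mul]
  ring

end Matrix

/-- The directional derivative of `f` in direction `a`, as a function of the base point, so that it
can be iterated. -/
def dirDeriv {E : Type*} [NormedAddCommGroup E] [NormedSpace ℝ E] (a : E) (f : E → ℝ) (x : E) : ℝ :=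
  fderiv ℝ f x a

section DirDeriv

variable {E : Type*} [NormedAddCommGroup E] [NormedSpace ℝ E] {f g : E → ℝ} {x e : E}

lemma contDiffAt_dirDeriv {m n : WithTop ℕ∞} (hf : ContDiffAt ℝ n f x) (hmn : m + 1 ≤ n) (a : E) :
    ContDiffAt ℝ m (dirDeriv a f) x :=
  (hf.fderiv_right hmn).clm_apply contDiffAt_const

lemma contDiffAt_dirDeriv_dirDeriv (hf : ContDiffAt ℝ 4 f x) (a : E) :
    ContDiffAt ℝ 2 (dirDeriv a (dirDeriv a f)) x :=
  contDiffAt_dirDeriv (contDiffAt_dirDeriv (m := 3) hf (by norm_num) a) (by norm_num) a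

lemma dirDeriv_congr (hfg : f =ᶠ[𝓝 x] g) (a : E) : dirDeriv a f =ᶠ[𝓝 x] dirDeriv a g :=
  hfg.fderiv.fun_comp (· a)

lemma dirDeriv_dirDeriv_eq_iteratedFDeriv (hf : ContDiffAt ℝ 2 f x) (a b : E) :
    dirDeriv a (dirDeriv b f) x = iteratedFDeriv ℝ 2 f x ![a, b] := by
  have hdiff : DifferentiableAt ℝ (fderiv ℝ f) x :=
    (hf.fderiv_right (m := 1) (by norm_num)).differentiableAt (by norm_num)
  unfold dirDeriv
  rw [fderiv_clm_apply hdiff (differentiableAt_const b), iteratedFDeriv_two_apply]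
  simp

lemma dirDeriv_comm (hf : ContDiffAt ℝ 2 f x) (a b : E) :
    dirDeriv a (dirDeriv b f) =ᶠ[𝓝 x] dirDeriv b (dirDeriv a f) := by
  filter_upwards [hf.eventually (by simp)] with y hy
  rw [dirDeriv_dirDeriv_eq_iteratedFDeriv hy, dirDeriv_dirDeriv_eq_iteratedFDeriv hy,
    iteratedFDeriv_two_apply, iteratedFDeriv_two_apply]
  exact hy.isSymmSndFDerivAt (by simp) a b

lemma dirDeriv_comm_second (hf : ContDiffAt ℝ 3 f x) (a b : E) :
    dirDeriv a (dirDeriv b (dirDeriv b f)) =ᶠ[𝓝 x] dirDeriv b (dirDeriv b (dirDeriv a f)) :=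
  (dirDeriv_comm (contDiffAt_dirDeriv hf (by norm_num) b) a b).trans
    (dirDeriv_congr (dirDeriv_comm (hf.of_le (by norm_num)) a b) b)

lemma dirDeriv_second_comm (hf : ContDiffAt ℝ 4 f x) (a b : E) :
    dirDeriv a (dirDeriv a (dirDeriv b (dirDeriv b f))) x =
      dirDeriv b (dirDeriv b (dirDeriv a (dirDeriv a f))) x :=
  ((dirDeriv_congr (dirDeriv_comm_second (hf.of_le (by norm_num)) a b) a).trans
    (dirDeriv_comm_second (contDiffAt_dirDeriv hf (by norm_num) a) a b)).self_of_nhds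

lemma dirDeriv_dirDeriv_add (hf : ContDiffAt ℝ 2 f x) (hg : ContDiffAt ℝ 2 g x) (a : E) :
    dirDeriv a (dirDeriv a fun y => f y + g y) x =
      dirDeriv a (dirDeriv a f) x + dirDeriv a (dirDeriv a g) x := by
  rw [dirDeriv_dirDeriv_eq_iteratedFDeriv (hf.add hg), dirDeriv_dirDeriv_eq_iteratedFDeriv hf,
    dirDeriv_dirDeriv_eq_iteratedFDeriv hg, fun_iteratedFDeriv_add_apply hf hg,
    add_apply]

lemma dirDeriv_dirDeriv_const_mul (hf : ContDiffAt ℝ 2 f x) (c : ℝ) (a : E) :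
    dirDeriv a (dirDeriv a fun y => c * f y) x = c * dirDeriv a (dirDeriv a f) x := by
  rw [dirDeriv_dirDeriv_eq_iteratedFDeriv (contDiffAt_const.mul hf),
    dirDeriv_dirDeriv_eq_iteratedFDeriv hf]
  simp only [← smul_eq_mul]
  rw [iteratedFDeriv_const_smul_apply' hf, smul_apply]

lemma dirDeriv_dirDeriv_sum {κ : Type*} (s : Finset κ) {f : κ → E → ℝ}
    (hf : ∀ l ∈ s, ContDiffAt ℝ 2 (f l) x) (a : E) :
    dirDeriv a (dirDeriv a fun y => ∑ l ∈ s, f l y) x =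
      ∑ l ∈ s, dirDeriv a (dirDeriv a (f l)) x := by
  rw [dirDeriv_dirDeriv_eq_iteratedFDeriv (ContDiffAt.sum hf), iteratedFDeriv_fun_sum_apply hf,
    sum_apply]
  exact Finset.sum_congr rfl fun l hl => (dirDeriv_dirDeriv_eq_iteratedFDeriv (hf l hl) a a).symm

lemma hasDerivAt_comp_line {t : ℝ} (hf : DifferentiableAt ℝ f (x + t • e)) :
    HasDerivAt (fun t : ℝ => f (x + t • e)) (dirDeriv e f (x + t • e)) t := by
  have hline : HasDerivAt (fun t : ℝ => x + t • e) e t := by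
    simpa using ((hasDerivAt_id t).smul_const e).const_add x
  exact hf.hasFDerivAt.comp_hasDerivAt t hline

lemma deriv_deriv_nonpos_of_isLocalMax {g : ℝ → ℝ} {t : ℝ} (hmax : IsLocalMax g t)
    (hg : ContinuousAt g t) : deriv (deriv g) t ≤ 0 := by
  by_contra! hpos
  have hmin : IsLocalMin g t := isLocalMin_of_deriv_deriv_pos hpos hmax.deriv_eq_zero hg
  have hconst : g =ᶠ[𝓝 t] fun _ => g t := by
    filter_upwards [hmax, hmin] with s hle hge using le_antisymm hle hge
  have hzero : deriv (deriv g) t = 0 := by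
    simpa using hconst.deriv.deriv_eq
  exact hpos.ne' hzero

theorem dirDeriv_dirDeriv_nonpos_of_isLocalMax (hf : ContDiffAt ℝ 2 f x) (hmax : IsLocalMax f x)
    (e : E) : dirDeriv e (dirDeriv e f) x ≤ 0 := by
  have hline : Tendsto (fun t : ℝ => x + t • e) (𝓝 0) (𝓝 x) := by
    simpa using (Continuous.tendsto (by fun_prop : Continuous fun t : ℝ => x + t • e) 0)
  have hderiv : deriv (fun t : ℝ => f (x + t • e)) =ᶠ[𝓝 0] fun t => dirDeriv e f (x + t • e) := by
    filter_upwards [hline.eventually (hf.eventually (by simp))] with t ht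
    exact (hasDerivAt_comp_line (ht.differentiableAt (by norm_num))).deriv
  have hderiv₂ : deriv (deriv fun t : ℝ => f (x + t • e)) 0 = dirDeriv e (dirDeriv e f) x := by
    have hdiff : DifferentiableAt ℝ (dirDeriv e f) (x + (0 : ℝ) • e) := by
      simpa using (contDiffAt_dirDeriv (m := 1) hf (by norm_num) e).differentiableAt (by norm_num)
    rw [hderiv.deriv_eq, (hasDerivAt_comp_line hdiff).deriv, zero_smul, add_zero]
  rw [← hderiv₂]
  refine deriv_deriv_nonpos_of_isLocalMax ?_ ?_
  · simpa [IsLocalMax, IsMaxFilter] using hline.eventually hmax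
  · exact ContinuousAt.comp' (by simpa using hf.continuousAt) (by fun_prop)

theorem dirDeriv_dirDeriv_nonneg_of_isLocalMin (hf : ContDiffAt ℝ 2 f x) (hmin : IsLocalMin f x)
    (e : E) : 0 ≤ dirDeriv e (dirDeriv e f) x := by
  have hneg := dirDeriv_dirDeriv_nonpos_of_isLocalMax (contDiffAt_const.mul hf)
    (f := fun y => -1 * f y) (by simpa using hmin.neg) e
  rw [dirDeriv_dirDeriv_const_mul hf] at hneg
  linarith

end DirDeriv

section MaximumPrinciple

variable {E : Type*} [NormedAddCommGroup E]

lemma dirDeriv_dirDeriv_norm_sq [InnerProductSpace ℝ E] (e x : E) :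
    dirDeriv e (dirDeriv e fun y => ‖y‖ ^ 2) x = 2 * ‖e‖ ^ 2 := by
  have hfirst : dirDeriv e (fun y : E => ‖y‖ ^ 2) = ⇑((2 : ℝ) • innerSL ℝ e) := by
    ext y
    simp [dirDeriv, fderiv_norm_sq_apply, real_inner_comm]
  rw [hfirst, dirDeriv, ContinuousLinearMap.fderiv]
  simp

/- At a common extremum of both functions, `0 ≤ ∂_ξ∂_ξ(∑ c_l ∂_l∂_l u) = ∑ c_l ∂_l∂_l(∂_ξ∂_ξ u)`,
while every `∂_l∂_l(∂_ξ∂_ξ u)` is at most `-2δ‖v_l‖²`. -/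
theorem not_isLocalMax_dirDeriv_dirDeriv_add_norm_sq [InnerProductSpace ℝ E] {κ : Type*} [Fintype κ]
    [Nonempty κ] {u : E → ℝ} {x : E} (hu : ContDiffAt ℝ 4 u x) {c : κ → ℝ} (hc : ∀ l, 0 < c l)
    {v : κ → E} (hv : ∀ l, v l ≠ 0)
    (hmin : IsLocalMin (fun y => ∑ l, dirDeriv (v l) (dirDeriv (v l) u) y * c l) x) {δ : ℝ}
    (hδ : 0 < δ) (ξ : E) :
    ¬ IsLocalMax (fun y => dirDeriv ξ (dirDeriv ξ u) y + δ * ‖y‖ ^ 2) x := by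
  intro hmax
  have hC2 (a : E) : ContDiffAt ℝ 2 (dirDeriv a (dirDeriv a u)) x :=
    contDiffAt_dirDeriv_dirDeriv hu a
  have hnorm : ContDiffAt ℝ 2 (fun y : E => ‖y‖ ^ 2) x := contDiffAt_id.norm_sq ℝ
  have hneg (l : κ) : dirDeriv ξ (dirDeriv ξ (dirDeriv (v l) (dirDeriv (v l) u))) x < 0 := by
    have htest := dirDeriv_dirDeriv_nonpos_of_isLocalMax
      ((hC2 ξ).add (contDiffAt_const.mul hnorm)) hmax (v l)
    rw [dirDeriv_dirDeriv_add (hC2 ξ) (contDiffAt_const.mul hnorm),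
      dirDeriv_dirDeriv_const_mul hnorm, dirDeriv_dirDeriv_norm_sq,
      dirDeriv_second_comm hu] at htest
    have : 0 < δ * (2 * ‖v l‖ ^ 2) := by
      have := norm_pos_iff.2 (hv l)
      positivity
    linarith
  have hterm (l : κ) :
      ContDiffAt ℝ 2 (fun y => dirDeriv (v l) (dirDeriv (v l) u) y * c l) x :=
    (hC2 (v l)).mul contDiffAt_const
  have hpos : 0 ≤ ∑ l, c l * dirDeriv ξ (dirDeriv ξ (dirDeriv (v l) (dirDeriv (v l) u))) x := by
    have htest := dirDeriv_dirDeriv_nonneg_of_isLocalMin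
      (ContDiffAt.sum fun l _ => hterm l) hmin ξ
    rw [dirDeriv_dirDeriv_sum _ fun l _ => hterm l] at htest
    simpa only [mul_comm _ (c _), dirDeriv_dirDeriv_const_mul (hC2 _)] using htest
  exact hpos.not_gt (Finset.sum_neg (fun l _ => mul_neg_of_pos_of_neg (hc l) (hneg l))
    Finset.univ_nonempty)

theorem le_of_forall_not_isLocalMax_add_norm_sq [ProperSpace E] {U : Set E} (hU : IsOpen U)
    (hb : IsBounded U) {w : E → ℝ} (hw : ContinuousOn w (closure U)) {K : ℝ}
    (hK : ∀ p ∈ frontier U, w p ≤ K)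
    (hmax : ∀ δ > 0, ∀ z ∈ U, ¬ IsLocalMax (fun y => w y + δ * ‖y‖ ^ 2) z) {x : E}
    (hx : x ∈ closure U) : w x ≤ K := by
  have hcompact : IsCompact (closure U) := hb.isCompact_closure
  obtain ⟨N, hN⟩ := hcompact.isBounded.exists_norm_le
  have hperturbed : ∀ δ > 0, w x ≤ K + δ * N ^ 2 := by
    intro δ hδ
    obtain ⟨z, hz, hzmax⟩ := hcompact.exists_isMaxOn ⟨x, hx⟩
      (f := fun y => w y + δ * ‖y‖ ^ 2) (hw.add (by fun_prop))
    have hzU : z ∉ U := fun hzU =>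
      hmax δ hδ z hzU (hzmax.isLocalMax (mem_of_superset (hU.mem_nhds hzU) subset_closure))
    have hwz : w z ≤ K := hK z ⟨hz, by rwa [hU.interior_eq]⟩
    calc w x ≤ w x + δ * ‖x‖ ^ 2 := le_add_of_nonneg_right (by positivity)
      _ ≤ w z + δ * ‖z‖ ^ 2 := hzmax hx
      _ ≤ K + δ * N ^ 2 := by
        gcongr
        exact hN z hz
  have hlim : Tendsto (fun δ => K + δ * N ^ 2) (𝓝[>] 0) (𝓝 K) := by
    refine tendsto_nhdsWithin_of_tendsto_nhds ?_
    simpa using (Continuous.tendsto (by fun_prop : Continuous fun δ : ℝ => K + δ * N ^ 2) 0)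
  exact ge_of_tendsto hlim (eventually_mem_nhdsWithin.mono hperturbed)

end MaximumPrinciple

section Ring

/- The complement contains a ball touching the sphere at `x`, by reflecting `c` in `x`. -/
lemma uniqueDiffOn_compl_ball {E : Type*} [NormedAddCommGroup E] [NormedSpace ℝ E] (c : E) {r : ℝ}
    (hr : 0 < r) : UniqueDiffOn ℝ (ball c r)ᶜ := by
  intro x hx
  have hrx : r ≤ dist x c := by simpa using hx
  have hpos : 0 < dist x c := hr.trans_le hrx
  have hx' : dist x (x + (x - c)) = dist x c := by simp [dist_eq_norm, norm_sub_rev]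
  have hsub : ball (x + (x - c)) (dist x c) ⊆ (ball c r)ᶜ := by
    refine fun y hy => (disjoint_left.1 (ball_disjoint_ball ?_) hy)
    have hcenters : dist (x + (x - c)) c = dist x c + dist x c := by
      rw [dist_eq_norm, dist_eq_norm, add_sub_right_comm, ← two_smul ℝ, norm_smul]
      norm_num [two_mul]
    linarith
  refine (uniqueDiffWithinAt_convex (convex_ball _ _) ?_ ?_).mono hsub
  · simpa [isOpen_ball.interior_eq] using hpos
  · rw [closure_ball _ hpos.ne', mem_closedBall, hx']

variable {E : Type*} [NormedAddCommGroup E] [NormedSpace ℝ E] {Ω : Set E} {c : E} {r : ℝ}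

lemma uniqueDiffOn_closure_diff_closedBall (hΩ : IsOpen Ω) (hconv : Convex ℝ Ω)
    (hsub : closedBall c r ⊆ Ω) (hr : 0 < r) : UniqueDiffOn ℝ (closure (Ω \ closedBall c r)) := by
  intro x hx
  by_cases hxΩ : x ∈ Ω
  · have hinner : Ω ∩ (ball c r)ᶜ ⊆ closure (Ω \ closedBall c r) := by
      rw [← interior_closedBall c hr.ne', ← closure_compl]
      exact hΩ.inter_closure
    have hxball : x ∈ (ball c r)ᶜ := by
      rw [← interior_closedBall c hr.ne', ← closure_compl]
      exact closure_mono inter_subset_right hx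
    rw [inter_comm] at hinner
    exact (((uniqueDiffOn_compl_ball c hr).inter hΩ) x ⟨hxball, hxΩ⟩).mono hinner
  · have houter : closure Ω ∩ (closedBall c r)ᶜ ⊆ closure (Ω \ closedBall c r) :=
      isClosed_closedBall.isOpen_compl.closure_inter
    have hxΩ' : x ∈ closure Ω := closure_mono sdiff_subset hx
    have hne : (interior (closure Ω)).Nonempty :=
      ⟨c, interior_maximal subset_closure hΩ (hsub (mem_closedBall_self hr.le))⟩
    exact ((uniqueDiffOn_convex hconv.closure hne).inter isClosed_closedBall.isOpen_compl x
      ⟨hxΩ', fun hxc => hxΩ (hsub hxc)⟩).mono houter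

lemma frontier_diff_closedBall_subset (hr : r ≠ 0) :
    frontier (Ω \ closedBall c r) ⊆ frontier Ω ∪ sphere c r := by
  rw [← frontier_closedBall c hr, ← frontier_compl (closedBall c r), sdiff_eq]
  exact (frontier_inter_subset _ _).trans (union_subset_union inter_subset_left inter_subset_right)

end Ring

section Hessian

lemma iteratedFDerivWithin_eq_iteratedFDeriv_of_mem_nhds {E F : Type*} [NormedAddCommGroup E]
    [NormedSpace ℝ E] [NormedAddCommGroup F] [NormedSpace ℝ F] (f : E → F) {s : Set E} {x : E}
    (hs : s ∈ 𝓝 x) (m : ℕ) : iteratedFDerivWithin ℝ m f s x = iteratedFDeriv ℝ m f x := by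
  rw [← iteratedFDerivWithin_univ]
  exact iteratedFDerivWithin_congr_set (eventuallyEq_univ.2 hs) m

variable {n k : ℕ} {u : Euc n → ℝ} {x : Euc n} {c : ℝ}

lemma hessianWithin_eq_hessian (u : Euc n → ℝ) {s : Set (Euc n)} (hs : s ∈ 𝓝 x) :
    hessianWithin u s x = hessian u x := by
  unfold hessianWithin hessian
  rw [iteratedFDerivWithin_eq_iteratedFDeriv_of_mem_nhds u hs 2]

lemma inner_toEuclideanCLM_hessian (hu : ContDiffAt ℝ 2 u x) (a : Euc n) :
    ⟪a, Matrix.toEuclideanCLM (𝕜 := ℝ) (hessian u x) a⟫ = dirDeriv a (dirDeriv a u) x := by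
  rw [← hessianWithin_eq_hessian u univ_mem, inner_toEuclideanCLM_hessianWithin,
    iteratedFDerivWithin_univ, dirDeriv_dirDeriv_eq_iteratedFDeriv hu]

/- The level set of `σ_{k+1}` through `D²u(x)` bounds a convex set, which the linearization of
`σ_{k+1}` at `D²u(x)` supports there. -/
lemma isLocalMin_sum_dirDeriv_mul_esymmOn_erase (hu : ContDiffAt ℝ 2 u x)
    (hΓ : ∀ᶠ y in 𝓝 x, InGardingCone (k + 1) (hessian u y))
    (hσ : ∀ᶠ y in 𝓝 x, sigmaMat (k + 1) (hessian u y) = c) (hA : (hessian u x).IsHermitian) :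
    IsLocalMin (fun y => ∑ l, dirDeriv (hA.eigenvectorBasis l)
      (dirDeriv (hA.eigenvectorBasis l) u) y *
        esymmOn (Finset.univ.erase l) k hA.eigenvalues) x := by
  obtain ⟨_, hAΓ⟩ := hΓ.self_of_nhds.exists_eigenvalues_mem
  filter_upwards [hΓ, hσ, hu.eventually (by simp)] with y hyΓ hyσ hy
  obtain ⟨hB, hBΓ⟩ := hyΓ.exists_eigenvalues_mem
  have hlevel : esymmOn Finset.univ (k + 1) hA.eigenvalues ≤
      esymmOn Finset.univ (k + 1) hB.eigenvalues := by
    rw [← sigmaMat_eq, ← sigmaMat_eq, hσ.self_of_nhds, hyσ]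
  simpa only [← inner_toEuclideanCLM_hessian hu, ← inner_toEuclideanCLM_hessian hy,
    inner_eigenvectorBasis_toEuclideanCLM, real_inner_self_eq_norm_sq,
    hA.eigenvectorBasis.norm_eq_one, one_pow, mul_one] using
    sum_esymmOn_erase_mul_eigenvalues_le hA hB hAΓ hBΓ hlevel

theorem not_isLocalMax_dirDeriv_dirDeriv_add_norm_sq_of_sigmaMat_eq [NeZero n]
    (hu : ContDiffAt ℝ 4 u x) (hΓ : ∀ᶠ y in 𝓝 x, InGardingCone (k + 1) (hessian u y))
    (hσ : ∀ᶠ y in 𝓝 x, sigmaMat (k + 1) (hessian u y) = c) {δ : ℝ} (hδ : 0 < δ) (ξ : Euc n) :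
    ¬ IsLocalMax (fun y => dirDeriv ξ (dirDeriv ξ u) y + δ * ‖y‖ ^ 2) x := by
  obtain ⟨hA, hAΓ⟩ := hΓ.self_of_nhds.exists_eigenvalues_mem
  exact not_isLocalMax_dirDeriv_dirDeriv_add_norm_sq hu
    (fun l => erase_mem_gardingCone hAΓ (Finset.mem_univ l) k le_rfl)
    (fun l => hA.eigenvectorBasis.orthonormal.ne_zero l)
    (isLocalMin_sum_dirDeriv_mul_esymmOn_erase (hu.of_le (by norm_num)) hΓ hσ hA) hδ ξ

lemma InGardingCone.exists_sum_eigenvalues_pos {A : Matrix (Fin n) (Fin n) ℝ}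
    (hA : InGardingCone (k + 1) A) : ∃ h : A.IsHermitian, 0 < ∑ i, h.eigenvalues i := by
  obtain ⟨h, hΓ⟩ := hA.exists_eigenvalues_mem
  exact ⟨h, by simpa only [esymmOn_one] using hΓ 1 (by omega)⟩

lemma InGardingCone.neZero {A : Matrix (Fin n) (Fin n) ℝ} (hA : InGardingCone (k + 1) A) :
    NeZero n := by
  refine ⟨?_⟩
  rintro rfl
  obtain ⟨_, hpos⟩ := hA.exists_sum_eigenvalues_pos
  simp at hpos

lemma iteratedFDerivWithin_le_of_frontier_hessOpNormWithin_le [NeZero n] {U : Set (Euc n)}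
    (hU : IsOpen U) (hb : IsBounded U) (hD : UniqueDiffOn ℝ (closure U))
    (hu : ContDiffOn ℝ 4 u (closure U))
    (hΓ : ∀ x ∈ U, InGardingCone (k + 1) (hessian u x))
    (hσ : ∀ x ∈ U, sigmaMat (k + 1) (hessian u x) = c)
    {K : ℝ} (hK : ∀ p ∈ frontier U, hessOpNormWithin u (closure U) p ≤ K) {ξ : Euc n}
    (hξ : ‖ξ‖ = 1) (hx : x ∈ closure U) : iteratedFDerivWithin ℝ 2 u (closure U) x ![ξ, ξ] ≤ K := by
  have hcont : ContinuousOn (fun y => iteratedFDerivWithin ℝ 2 u (closure U) y ![ξ, ξ])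
      (closure U) :=
    (ContinuousMultilinearMap.apply ℝ (fun _ : Fin 2 => Euc n) ℝ
      ![ξ, ξ]).continuous.comp_continuousOn
      (hu.continuousOn_iteratedFDerivWithin (m := 2) (by norm_num) hD)
  refine le_of_forall_not_isLocalMax_add_norm_sq hU hb hcont (fun p hp => ?_)
    (fun δ hδ z hz hmax => ?_) hx
  · calc iteratedFDerivWithin ℝ 2 u (closure U) p ![ξ, ξ]
        = ⟪ξ, Matrix.toEuclideanCLM (𝕜 := ℝ) (hessianWithin u (closure U) p) ξ⟫ :=
          (inner_toEuclideanCLM_hessianWithin u _ p ξ ξ).symm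
      _ ≤ ‖ξ‖ * ‖Matrix.toEuclideanCLM (𝕜 := ℝ) (hessianWithin u (closure U) p) ξ‖ :=
          real_inner_le_norm _ _
      _ ≤ hessOpNormWithin u (closure U) p := by
          simpa [hξ, hessOpNormWithin] using ContinuousLinearMap.le_opNorm
            (Matrix.toEuclideanCLM (𝕜 := ℝ) (hessianWithin u (closure U) p)) ξ
      _ ≤ K := hK p hp
  · have hnhds : U ∈ 𝓝 z := hU.mem_nhds hz
    have hC4 : ∀ y ∈ U, ContDiffAt ℝ 4 u y := fun y hy =>
      hu.contDiffAt (mem_of_superset (hU.mem_nhds hy) subset_closure)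
    refine not_isLocalMax_dirDeriv_dirDeriv_add_norm_sq_of_sigmaMat_eq (hC4 z hz)
      (eventually_of_mem hnhds hΓ) (eventually_of_mem hnhds hσ) hδ ξ (hmax.congr ?_)
    filter_upwards [hnhds] with y hy
    rw [iteratedFDerivWithin_eq_iteratedFDeriv_of_mem_nhds u
      (mem_of_superset (hU.mem_nhds hy) subset_closure) 2,
      dirDeriv_dirDeriv_eq_iteratedFDeriv ((hC4 y hy).of_le (by norm_num))]

end Hessian

theorem statement13_general {n k : ℕ} (hk : 1 ≤ k) {U : Set (Euc n)} (hU : IsOpen U)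
    (hb : IsBounded U) (hD : UniqueDiffOn ℝ (closure U)) {u : Euc n → ℝ}
    (hu : ContDiffOn ℝ 4 u (closure U))
    (hΓ : ∀ x ∈ U, InGardingCone k (hessianWithin u (closure U) x))
    {c : ℝ} (hσ : ∀ x ∈ U, sigmaMat k (hessianWithin u (closure U) x) = c)
    {K : ℝ} (hK : ∀ p ∈ frontier U, hessOpNormWithin u (closure U) p ≤ K)
    {x : Euc n} (hx : x ∈ closure U) :
    hessOpNormWithin u (closure U) x ≤ n * K := by
  obtain ⟨k, rfl⟩ := Nat.exists_eq_add_of_le' hk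
  obtain ⟨y, hy⟩ := closure_nonempty_iff.1 ⟨x, hx⟩
  have : NeZero n := (hΓ y hy).neZero
  by_cases hxU : x ∈ U
  · have hhess : ∀ y ∈ U, hessianWithin u (closure U) y = hessian u y := fun y hy =>
      hessianWithin_eq_hessian u (mem_of_superset (hU.mem_nhds hy) subset_closure)
    obtain ⟨hA, htrace⟩ := (hΓ x hxU).exists_sum_eigenvalues_pos
    have hquad (ξ : Euc n) (hξ : ‖ξ‖ = 1) :
        ⟪ξ, Matrix.toEuclideanCLM (𝕜 := ℝ) (hessianWithin u (closure U) x) ξ⟫ ≤ K := by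
      rw [inner_toEuclideanCLM_hessianWithin]
      exact iteratedFDerivWithin_le_of_frontier_hessOpNormWithin_le hU hb hD hu
        (fun y hy => hhess y hy ▸ hΓ y hy) (fun y hy => hhess y hy ▸ hσ y hy) hK hξ hx
    simpa only [hessOpNormWithin, Fintype.card_fin] using
      norm_toEuclideanCLM_le_card_mul hA htrace.le hquad
  · have hxK : hessOpNormWithin u (closure U) x ≤ K := hK x ⟨hx, by rwa [hU.interior_eq]⟩
    have hn : (1 : ℝ) ≤ n := mod_cast NeZero.one_le
    exact hxK.trans (le_mul_of_one_le_left ((norm_nonneg _).trans hxK) hn)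

/-- global `C²` estimate in terms of the boundary `C²` bound,
with a constant depending only on `n` and `k`. -/
theorem statement13 {n k : ℕ} (hk : 1 ≤ k) (hkn : k ≤ n) :
    ∃ C : ℝ, 0 < C ∧ ∀ Ω₁ : Set (Euc n), IsOpen Ω₁ → Convex ℝ Ω₁ →
      IsBounded Ω₁ → HasSmoothBoundary Ω₁ →
      ∀ ε₀ : ℝ, 0 < ε₀ → closedBall (0 : Euc n) ε₀ ⊆ Ω₁ →
      ∀ ψ : Euc n → ℝ, IsSol22 k Ω₁ ψ →
      ∀ M₁ : ℝ, 0 < M₁ → (∀ x ∈ closure Ω₁, -ψ x < M₁) →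
      (∀ ε ∈ Ioo (0:ℝ) ε₀, ∀ x ∈ frontier Ω₁, underSol k (0 : Euc n) ε M₁ x ≤ 0) →
      ∀ M : ℝ, M₁ < M → ∀ ε ∈ Ioo (0:ℝ) ε₀, ∀ u : Euc n → ℝ,
        IsSol k Ω₁ (0 : Euc n) ε M u →
        ContDiffOn ℝ 4 u (ringSet Ω₁ (0 : Euc n) ε) →
        ∀ K : ℝ,
          (∀ p ∈ frontier Ω₁ ∪ sphere (0 : Euc n) ε,
            hessOpNormWithin u (ringSet Ω₁ (0 : Euc n) ε) p ≤ K) →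
          ∀ x ∈ ringSet Ω₁ (0 : Euc n) ε,
            hessOpNormWithin u (ringSet Ω₁ (0 : Euc n) ε) x ≤ C * (1 + K) := by
  refine ⟨n, mod_cast hk.trans hkn, fun Ω₁ hΩ hconv hb _ ε₀ _ hε₀ _ _ _ _ _ _ _ _ ε hε u hsol hu
    K hK x hx => ?_⟩
  have hball : closedBall 0 ε ⊆ Ω₁ := (closedBall_subset_closedBall hε.2.le).trans hε₀
  calc hessOpNormWithin u (ringSet Ω₁ 0 ε) x
      ≤ n * K := statement13_general hk (hΩ.sdiff isClosed_closedBall) (hb.subset sdiff_subset)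
        (uniqueDiffOn_closure_diff_closedBall hΩ hconv hball hε.1) hu
        (fun y hy => (hsol.2.1 y hy).1) (fun y hy => (hsol.2.1 y hy).2)
        (fun p hp => hK p (frontier_diff_closedBall_subset hε.1.ne' hp)) hx
    _ ≤ n * (1 + K) := by
        gcongr
        linarith
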